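/- arXiv:2309.01119 — 2 statements merged into one kernel-verified Lean document; each statement's English description precedes it below -/
import Mathlib

section
/- Let T = {0, u₁, u₂} ⊆ V with u₁, u₂ linearly independent. Then the number of non-constant codewords of RM_q(1,m) vanishing on all of T is q^{m-2} − 1; vanishing on exactly two points of T is 3q^{m-2}(q-1); vanishing on exactly one point is 3q^{m-2}(q-1)²; and vanishing on no point of T is (q-1)(q^m − 2q^{m-1} + q^{m-2} − 1). -/
open Classical in
/-- Indicator of zero. -/
noncomputable def zi {F : Type} [Field F] (a : F) : ℕ := if a = 0 then 1 else 0

open Classical in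
lemma aux_sum (F : Type) [Field F] [Fintype F] (g : ℕ → ℕ) :
    ∑ a : F, g (zi a) = g 1 + (Fintype.card F - 1) * g 0 := by
  rw [← Finset.add_sum_erase _ _ (Finset.mem_univ (0 : F))]
  rw [Finset.sum_congr rfl (g := fun _ => g 0)]
  · simp [Finset.card_erase_of_mem, zi]
  · intro x hx
    simp [Finset.ne_of_mem_erase hx, zi]

open Classical in
lemma aux_surj (F : Type) [Field F] (m : ℕ) (u₁ u₂ : Fin m → F)
    (h : LinearIndependent F ![u₁, u₂]) (a b : F) :
    ∃ l : (Fin m → F) →ₗ[F] F, l u₁ = a ∧ l u₂ = b := by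
  obtain ⟨g, hg⟩ := LinearMap.exists_leftInverse_of_injective
    (Fintype.linearCombination F ![u₁, u₂])
    (LinearMap.ker_eq_bot.2 (LinearIndependent.fintypeLinearCombination_injective h))
  have h1 : g u₁ = Pi.single 0 1 := by
    have := LinearMap.congr_fun hg (Pi.single 0 1)
    simpa [Fintype.linearCombination_apply] using this
  have h2 : g u₂ = Pi.single 1 1 := by
    have := LinearMap.congr_fun hg (Pi.single 1 1)
    simpa [Fintype.linearCombination_apply] using this
  refine ⟨a • (LinearMap.proj 0 ∘ₗ g) + b • (LinearMap.proj 1 ∘ₗ g), ?_, ?_⟩ <;>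
    simp [h1, h2]

/-- Evaluation at the three points. -/
def evMap (F : Type) [Field F] (m : ℕ) (u₁ u₂ : Fin m → F) :
    (((Fin m → F) →ₗ[F] F) × F) →+ (F × F × F) where
  toFun p := (p.2, p.1 u₁ + p.2, p.1 u₂ + p.2)
  map_zero' := by simp
  map_add' p r := by
    simp only [Prod.fst_add, Prod.snd_add, LinearMap.add_apply, Prod.mk_add_mk, Prod.mk.injEq]
    refine ⟨trivial, by ring, by ring⟩

lemma ev_surj (F : Type) [Field F] (m : ℕ) (u₁ u₂ : Fin m → F)
    (h : LinearIndependent F ![u₁, u₂]) : Function.Surjective (evMap F m u₁ u₂) := by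
  rintro ⟨a, b, c⟩
  obtain ⟨l, h1, h2⟩ := aux_surj F m u₁ u₂ h (b - a) (c - a)
  exact ⟨(l, a), by simp [evMap, h1, h2]⟩

lemma aux_card_dom (F : Type) [Field F] [Fintype F] (m : ℕ) :
    Nat.card (((Fin m → F) →ₗ[F] F) × F) = Fintype.card F ^ (m + 1) := by
  rw [Nat.card_prod, Nat.card_eq_fintype_card (α := F), pow_succ]
  congr 1
  rw [Nat.card_congr ((Pi.basisFun F (Fin m)).constr F (M' := F)).toEquiv.symm]
  simp

open Classical in
lemma aux_fiber (F : Type) [Field F] [Fintype F] (m : ℕ) (hm : 2 ≤ m) (u₁ u₂ : Fin m → F)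
    (h : LinearIndependent F ![u₁, u₂]) [Fintype (((Fin m → F) →ₗ[F] F) × F)] (y : F × F × F) :
    (Finset.univ.filter fun p => evMap F m u₁ u₂ p = y).card = Fintype.card F ^ (m - 2) := by
  have hall : ∀ z, (Finset.univ.filter fun p => evMap F m u₁ u₂ p = z).card
      = (Finset.univ.filter fun p => evMap F m u₁ u₂ p = y).card := fun z =>
    AddMonoidHom.card_fiber_eq_of_mem_range _ (ev_surj F m u₁ u₂ h z) (ev_surj F m u₁ u₂ h y)
  have h1 := Finset.card_eq_sum_card_fiberwise (f := evMap F m u₁ u₂) (s := Finset.univ)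
    (t := Finset.univ) (by simp)
  simp only [hall] at h1
  rw [Finset.card_univ, ← Nat.card_eq_fintype_card, aux_card_dom] at h1
  simp only [Finset.sum_const, Finset.card_univ, Fintype.card_prod, smul_eq_mul] at h1
  obtain ⟨k, rfl⟩ := Nat.exists_eq_add_of_le hm
  have hq : 0 < Fintype.card F := Fintype.card_pos
  have e : 2 + k - 2 = k := by omega
  rw [e]
  have h2 : Fintype.card F ^ (2 + k + 1) = (Fintype.card F * (Fintype.card F * Fintype.card F)) *
      Fintype.card F ^ k := by ring
  rw [h2] at h1
  exact (Nat.eq_of_mul_eq_mul_left (by positivity) h1).symm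

open Classical in
/-- Number of zero entries. -/
noncomputable def nz {F : Type} [Field F] (y : F × F × F) : ℕ :=
  zi y.1 + zi y.2.1 + zi y.2.2

open Classical in
lemma aux_nz (F : Type) [Field F] [Fintype F] (k : ℕ) :
    (Finset.univ.filter fun y : F × F × F => nz y = k).card =
      (if k = 3 then 1 else 0) + (Fintype.card F - 1) * (if k = 2 then 3 else 0)
      + (Fintype.card F - 1) ^ 2 * (if k = 1 then 3 else 0)
      + (Fintype.card F - 1) ^ 3 * (if k = 0 then 1 else 0) := by
  rw [Finset.card_filter]
  obtain ⟨G, hG⟩ : ∃ G : ℕ → ℕ, ∀ n, G n = if n = k then 1 else 0 := ⟨_, fun _ => rfl⟩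
  rw [Finset.sum_congr rfl (g := fun y => G (nz y)) (fun y _ => by rw [hG])]
  simp only [Fintype.sum_prod_type, nz]
  have h3 := fun n => aux_sum F (fun t => G (n + t))
  beta_reduce at h3
  simp only [h3]
  have h2 := fun n => aux_sum F (fun t => G (n + t + 1) + (Fintype.card F - 1) * G (n + t + 0))
  beta_reduce at h2
  simp only [h2]
  have h1 := aux_sum F (fun t => G (t + 1 + 1) + (Fintype.card F - 1) * G (t + 1 + 0)
    + (Fintype.card F - 1) * (G (t + 0 + 1) + (Fintype.card F - 1) * G (t + 0 + 0)))
  beta_reduce at h1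
  rw [h1]
  simp only [hG]
  rcases k with _ | _ | _ | _ | k <;> simp <;> ring

open Classical in
lemma aux_zeros (F : Type) [Field F] (m : ℕ) (u₁ u₂ : Fin m → F)
    (h : LinearIndependent F ![u₁, u₂]) (l : (Fin m → F) →ₗ[F] F) (b : F) :
    {x ∈ ({0, u₁, u₂} : Set (Fin m → F)) | l x + b = 0}.ncard = nz (evMap F m u₁ u₂ (l, b)) := by
  have n1 : u₁ ≠ 0 := by simpa using h.ne_zero 0
  have n2 : u₂ ≠ 0 := by simpa using h.ne_zero 1
  have n3 : u₁ ≠ u₂ := fun e => by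
    have := h.injective (a₁ := 0) (a₂ := 1) (by simpa using e)
    simp at this
  have : {x ∈ ({0, u₁, u₂} : Set (Fin m → F)) | l x + b = 0} =
      (({0, u₁, u₂} : Finset (Fin m → F)).filter fun x => l x + b = 0 : Finset _) := by
    ext; simp
  rw [this, Set.ncard_coe_finset, Finset.card_filter, Finset.sum_insert, Finset.sum_pair n3]
  · simp [nz, zi, evMap, add_assoc]
    congr!
  · simp [n1.symm, n2.symm]

open Classical in
lemma aux_main (F : Type) [Field F] [Fintype F] (m : ℕ) (hm : 2 ≤ m) (u₁ u₂ : Fin m → F)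
    (h : LinearIndependent F ![u₁, u₂]) (k : ℕ) :
    {c ∈ {c : (Fin m → F) → F | ∃ (l : (Fin m → F) →ₗ[F] F), l ≠ 0 ∧ ∃ b : F,
      c = fun x => l x + b} | {x ∈ ({0, u₁, u₂} : Set (Fin m → F)) | c x = 0}.ncard = k}.ncard
      + ((if k = 3 then 1 else 0) + (Fintype.card F - 1) * (if k = 0 then 1 else 0)) =
    Fintype.card F ^ (m - 2) * (Finset.univ.filter fun y : F × F × F => nz y = k).card := by
  have : Finite (((Fin m → F) →ₗ[F] F) × F) := Nat.finite_of_card_ne_zero (by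
    rw [aux_card_dom]; have : 0 < Fintype.card F := Fintype.card_pos
    positivity)
  have := Fintype.ofFinite (((Fin m → F) →ₗ[F] F) × F)
  let φ : (((Fin m → F) →ₗ[F] F) × F) → ((Fin m → F) → F) := fun p x => p.1 x + p.2
  have hφ : Function.Injective φ := by
    rintro ⟨l, b⟩ ⟨l', b'⟩ e
    have hb : b = b' := by simpa [φ] using congrFun e 0
    subst hb
    have : l = l' := LinearMap.ext fun x => by simpa [φ] using congrFun e x
    rw [this]
  have hset : {c ∈ {c : (Fin m → F) → F | ∃ (l : (Fin m → F) →ₗ[F] F), l ≠ 0 ∧ ∃ b : F,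
      c = fun x => l x + b} | {x ∈ ({0, u₁, u₂} : Set (Fin m → F)) | c x = 0}.ncard = k} =
      φ '' ((Finset.univ.filter fun p => nz (evMap F m u₁ u₂ p) = k).filter
        fun p => p.1 ≠ 0 : Finset _) := by
    ext c
    simp only [Set.mem_ofPred_eq, Set.mem_image, Finset.coe_filter, Finset.mem_filter,
      Finset.mem_univ, true_and]
    constructor
    · rintro ⟨⟨l, hl, b, rfl⟩, hk⟩
      exact ⟨(l, b), ⟨by rw [← aux_zeros F m u₁ u₂ h]; exact hk, hl⟩, rfl⟩
    · rintro ⟨⟨l, b⟩, ⟨hk, hl⟩, rfl⟩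
      exact ⟨⟨l, hl, b, rfl⟩, by rw [← aux_zeros F m u₁ u₂ h] at hk; exact hk⟩
  rw [hset, Set.ncard_image_of_injective _ hφ, Set.ncard_coe_finset]
  have hconst : ((Finset.univ.filter fun p => nz (evMap F m u₁ u₂ p) = k).filter
        fun p => ¬ p.1 ≠ 0).card =
      (if k = 3 then 1 else 0) + (Fintype.card F - 1) * (if k = 0 then 1 else 0) := by
    have e : ((Finset.univ.filter fun p => nz (evMap F m u₁ u₂ p) = k).filter
        fun p => ¬ p.1 ≠ 0) = (Finset.univ.filter fun b : F => 3 * zi b = k).map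
        ⟨fun b => ((0 : (Fin m → F) →ₗ[F] F), b), fun a b hab => by simpa using hab⟩ := by
      ext ⟨l, b⟩
      simp only [Finset.mem_filter, Finset.mem_univ, true_and, not_not, Finset.mem_map]
      have key : nz (evMap F m u₁ u₂ (0, b)) = 3 * zi b := by
        by_cases hb : b = 0 <;> simp [nz, zi, evMap, hb]
      constructor
      · rintro ⟨hk, rfl⟩
        exact ⟨b, by rw [← key]; exact hk, rfl⟩
      · rintro ⟨b', hk, he⟩
        obtain ⟨rfl, rfl⟩ := Prod.mk.inj he
        exact ⟨by rw [key]; exact hk, rfl⟩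
    rw [e, Finset.card_map, Finset.card_filter, aux_sum F (fun t => if 3 * t = k then 1 else 0)]
    simp [eq_comm]
  rw [← hconst, Finset.card_filter_add_card_filter_not]
  rw [Finset.card_eq_sum_card_fiberwise (f := evMap F m u₁ u₂)
    (t := Finset.univ.filter fun y : F × F × F => nz y = k) (by intro p; simp)]
  rw [Finset.sum_congr rfl (g := fun _ => Fintype.card F ^ (m - 2))]
  · simp [mul_comm]
  · intro y hy
    rw [← aux_fiber F m hm u₁ u₂ h y]
    congr 1
    ext p
    simp only [Finset.mem_filter, Finset.mem_univ, true_and] at hy ⊢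
    constructor
    · exact fun h => h.2
    · rintro rfl
      exact ⟨hy, rfl⟩

lemma aux_arith (q m : ℕ) (hq : 1 < q) (hm : 2 ≤ m) (N : ℕ → ℕ)
    (M : ∀ k, N k + ((if k = 3 then 1 else 0) + (q - 1) * (if k = 0 then 1 else 0)) =
      q ^ (m - 2) * ((if k = 3 then 1 else 0) + (q - 1) * (if k = 2 then 3 else 0)
      + (q - 1) ^ 2 * (if k = 1 then 3 else 0) + (q - 1) ^ 3 * (if k = 0 then 1 else 0))) :
    N 3 = q ^ (m - 2) - 1 ∧ N 2 = 3 * q ^ (m - 2) * (q - 1) ∧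
    N 1 = 3 * q ^ (m - 2) * (q - 1) ^ 2 ∧
    N 0 = (q - 1) * (q ^ m - 2 * q ^ (m - 1) + q ^ (m - 2) - 1) := by
  have h3 := M 3
  have h2 := M 2
  have h1 := M 1
  have h0 := M 0
  obtain ⟨r, hr⟩ := Nat.exists_eq_add_of_lt hq
  obtain ⟨k, rfl⟩ := Nat.exists_eq_add_of_le hm
  have e1 : 2 + k - 2 = k := by omega
  have e2 : 2 + k - 1 = k + 1 := by omega
  have e3 : q - 1 = r + 1 := by omega
  have e4 : q = r + 2 := by omega
  simp only [e1, e2, e3] at h0 h1 h2 h3 ⊢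
  simp only [e4] at h0 h1 h2 h3 ⊢
  norm_num at h0 h1 h2 h3
  refine ⟨?_, ?_, ?_, ?_⟩
  · omega
  · rw [h2]; ring
  · rw [h1]; ring
  · have e5 : (r + 2) ^ (2 + k) - 2 * (r + 2) ^ (k + 1) + (r + 2) ^ k
        = (r + 2) ^ k * (r + 1) ^ 2 := by
      have : (r + 2) ^ (2 + k) = 2 * (r + 2) ^ (k + 1) + (r + 2) ^ k * (r * (r + 2)) := by ring
      rw [this, Nat.add_sub_cancel_left]
      ring
    rw [e5, Nat.mul_sub, mul_one]
    apply Nat.eq_sub_of_add_eq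
    rw [h0]; ring


/-- Counts of non-constant codewords of `RM_q(1,m)` by number of zeros on
`T = {0, u₁, u₂}` with `u₁, u₂` linearly independent. -/
theorem stmt_6 (F : Type) [Field F] [Fintype F] (q m : ℕ) (hq : q = Fintype.card F)
    (hm : 2 ≤ m) (u₁ u₂ : Fin m → F) (h : LinearIndependent F ![u₁, u₂])
    (T : Set (Fin m → F)) (hT : T = {0, u₁, u₂})
    (NC : Set ((Fin m → F) → F))
    (hNC : NC = {c | ∃ (l : (Fin m → F) →ₗ[F] F), l ≠ 0 ∧ ∃ b : F, c = fun x => l x + b}) :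
    {c ∈ NC | {x ∈ T | c x = 0}.ncard = 3}.ncard = q ^ (m - 2) - 1 ∧
    {c ∈ NC | {x ∈ T | c x = 0}.ncard = 2}.ncard = 3 * q ^ (m - 2) * (q - 1) ∧
    {c ∈ NC | {x ∈ T | c x = 0}.ncard = 1}.ncard = 3 * q ^ (m - 2) * (q - 1) ^ 2 ∧
    {c ∈ NC | {x ∈ T | c x = 0}.ncard = 0}.ncard
      = (q - 1) * (q ^ m - 2 * q ^ (m - 1) + q ^ (m - 2) - 1) := by
  subst hq hT hNC
  have M := aux_main F m hm u₁ u₂ h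
  simp only [aux_nz] at M
  exact aux_arith _ m Fintype.one_lt_card hm _ M
end

section
/- Let q ≥ 3 be a prime power, m ≥ 2, ℓ = (q−1)q^{m-1}, C = RM_q(1,m). For any 4-element subset T of V, the number of weight-ℓ codewords whose support contains T is one of the four values λ₁ = (q−1)(q^m − 3q^{m-1} + 3q^{m-2} − q^{m-3} − 1) (only when m ≥ 3), λ₂ = (q−1)(q^m − 3q^{m-1} + 2q^{m-2} − 1), λ₃ = (q−1)(q^m − 3q^{m-1} + 3q^{m-2} − 1), λ₄ = (q−1)(q^m − 3q^{m-1} − 1), depending only on the affine configuration of T. In particular C_ℓ is a 4-(q^m, ℓ, (λ₁,λ₂,λ₃,λ₄))-design. -/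
set_option linter.unusedSectionVars false

open Classical in
lemma aux_count {W X : Type*} [AddCommGroup W] [Finite W] [AddCommGroup X] [Fintype X]
    (E : W →+ X) (hE : Function.Surjective E) (P : X → Prop) [DecidablePred P] :
    {w : W | P (E w)}.ncard * Fintype.card X
      = (Finset.univ.filter P).card * Nat.card W := by
  have : Fintype W := Fintype.ofFinite W
  have hf : ∀ x : X, (Finset.univ.filter (fun w => E w = x)).card
      = (Finset.univ.filter (fun w => E w = 0)).card := fun x =>
    AddMonoidHom.card_fiber_eq_of_mem_range E (hE x) (hE 0)
  have h1 : {w : W | P (E w)}.ncard = (Finset.univ.filter P).card *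
      (Finset.univ.filter (fun w => E w = 0)).card := by
    rw [Set.ncard_eq_toFinset_card']
    rw [Finset.card_eq_sum_card_fiberwise (f := E) (t := Finset.univ.filter P)]
    · rw [Finset.sum_const_nat (m := (Finset.univ.filter (fun w => E w = 0)).card)]
      intro x hx
      rw [← hf x]
      congr 1
      ext w
      simp at hx ⊢
      rintro rfl; exact hx
    · intro w hw
      simpa using hw
  have h2 : Nat.card W = Fintype.card X *
      (Finset.univ.filter (fun w => E w = 0)).card := by
    rw [Nat.card_eq_fintype_card, ← Finset.card_univ,
      Finset.card_eq_sum_card_fiberwise (f := E) (t := Finset.univ)]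
    · rw [Finset.sum_const_nat (m := (Finset.univ.filter (fun w => E w = 0)).card)]
      · simp
      intro x hx
      exact hf x
    · intro w hw
      simp
  rw [h1, h2]; ring

open Classical in
lemma aux_prod {A B : Type*} [Fintype A] [Fintype B] (S : Finset A) (P : A × B → Prop) [DecidablePred P] (n : ℕ)
    (h1 : ∀ a ∈ S, (Finset.univ.filter (fun b => P (a, b))).card = n)
    (h2 : ∀ a b, P (a, b) → a ∈ S) : (Finset.univ.filter P).card = S.card * n := by
  rw [Finset.card_eq_sum_card_fiberwise (f := Prod.fst) (t := S)]
  · rw [Finset.sum_const_nat (m := n)]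
    intro a ha
    rw [← h1 a ha]
    apply Finset.card_bij (fun x _ => x.2)
    · rintro ⟨x, y⟩ h
      simp at h ⊢
      rcases h with ⟨h, rfl⟩; exact h
    · rintro ⟨x, y⟩ h ⟨x', y'⟩ h' e
      simp at h h' e ⊢
      simp [h.2, h'.2, e]
    · intro b hb
      exact ⟨(a, b), by simpa using hb, rfl⟩
  · rintro ⟨a, b⟩ h
    simp at h ⊢
    exact h2 _ _ h

section
variable {F : Type} [Field F] [Fintype F]

open Classical in
lemma aux_not (P : F → Prop) [DecidablePred P] (s : Finset F) (h : ∀ x, P x ↔ x ∉ s) :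
    (Finset.univ.filter P).card = Fintype.card F - s.card := by
  rw [← Finset.card_compl]
  congr 1
  ext x
  simp [h]

open Classical in
lemma aux_c1 : (Finset.univ.filter (fun x : F => x ≠ 0)).card = Fintype.card F - 1 := by
  rw [aux_not _ {0} (by simp)]; simp

lemma aux_lin {γ t z : F} (hγ : γ ≠ 0) : t + γ * z = 0 ↔ z = - t / γ := by
  rw [eq_div_iff hγ]
  constructor
  · intro h; linear_combination h
  · intro h; linear_combination h

open Classical in
lemma aux_c2 {α β : F} (hα : α ≠ 0) (hβ : β ≠ 0) :
    (Finset.univ.filter (fun p : F × F => (p.1 ≠ 0 ∧ p.2 ≠ 0) ∧ α * p.1 + β * p.2 ≠ 0)).card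
      = (Fintype.card F - 1) * (Fintype.card F - 2) := by
  rw [aux_prod (Finset.univ.filter (fun x : F => x ≠ 0)) _ (Fintype.card F - 2), aux_c1]
  · intro x hx
    simp at hx
    rw [aux_not _ {0, - (α * x) / β}, Finset.card_pair]
    · symm; simp [hα, hβ, hx]
    · intro y; simp [hx, aux_lin hβ]
  · intro a b h; simpa using h.1.1

open Classical in
lemma aux_c2z {α β : F} (hα : α ≠ 0) (hβ : β ≠ 0) :
    (Finset.univ.filter (fun p : F × F => (p.1 ≠ 0 ∧ p.2 ≠ 0) ∧ α * p.1 + β * p.2 = 0)).card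
      = (Fintype.card F - 1) := by
  rw [aux_prod (Finset.univ.filter (fun x : F => x ≠ 0)) _ 1, aux_c1, mul_one]
  · intro x hx
    simp at hx
    rw [Finset.card_eq_one]
    refine ⟨- (α * x) / β, ?_⟩
    ext y
    simp [hx, aux_lin hβ]
    rintro rfl
    simp [hα, hβ, hx]
  · intro a b h; simpa using h.1.1

open Classical in
lemma aux_c22 {α β α' β' : F} (hα : α ≠ 0) (hβ : β ≠ 0) (hα' : α' ≠ 0) (hβ' : β' ≠ 0)
    (hne : α * β' ≠ α' * β) :
    (Finset.univ.filter (fun p : F × F => (p.1 ≠ 0 ∧ p.2 ≠ 0) ∧ α * p.1 + β * p.2 ≠ 0 ∧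
      α' * p.1 + β' * p.2 ≠ 0)).card
      = (Fintype.card F - 1) * (Fintype.card F - 3) := by
  rw [aux_prod (Finset.univ.filter (fun x : F => x ≠ 0)) _ (Fintype.card F - 3), aux_c1]
  · intro x hx
    simp at hx
    rw [aux_not _ {0, - (α * x) / β, - (α' * x) / β'}, Finset.card_eq_three.2]
    · refine ⟨_, _, _, ?_, ?_, ?_, rfl⟩
      · symm; simp [hα, hβ, hx]
      · symm; simp [hα', hβ', hx]
      · rw [Ne, div_eq_div_iff hβ hβ']
        intro h
        apply hne
        apply mul_right_cancel₀ hx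
        linear_combination -h
    · intro y; simp [hx, aux_lin hβ, aux_lin hβ']
  · intro a b h; simpa using h.1.1

open Classical in
lemma aux_c3a {α β : F} (hα : α ≠ 0) (hβ : β ≠ 0) :
    (Finset.univ.filter (fun p : (F × F) × F => (p.1.1 ≠ 0 ∧ p.1.2 ≠ 0) ∧ p.2 ≠ 0 ∧
        α * p.1.1 + β * p.1.2 ≠ 0)).card
      = (Fintype.card F - 1) * (Fintype.card F - 2) * (Fintype.card F - 1) := by
  rw [aux_prod (Finset.univ.filter (fun p : F × F => (p.1 ≠ 0 ∧ p.2 ≠ 0) ∧ α * p.1 + β * p.2 ≠ 0))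
    _ (Fintype.card F - 1), aux_c2 hα hβ]
  · intro x hx
    simp at hx
    rw [← aux_c1]
    congr 1
    ext y; simp [hx]
  · intro a b h; simp at h ⊢; tauto

open Classical in
lemma aux_c3b {α β γ : F} (hα : α ≠ 0) (hβ : β ≠ 0) (hγ : γ ≠ 0) :
    (Finset.univ.filter (fun p : (F × F) × F => (p.1.1 ≠ 0 ∧ p.1.2 ≠ 0) ∧ p.2 ≠ 0 ∧
        α * p.1.1 + β * p.1.2 + γ * p.2 ≠ 0)).card
      = (Fintype.card F - 1) * (Fintype.card F - 2) * (Fintype.card F - 2)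
        + (Fintype.card F - 1) * (Fintype.card F - 1) := by
  rw [← Finset.card_filter_add_card_filter_not (fun p : (F × F) × F => α * p.1.1 + β * p.1.2 ≠ 0),
    Finset.filter_filter, Finset.filter_filter]
  congr 1
  · rw [aux_prod (Finset.univ.filter
      (fun p : F × F => (p.1 ≠ 0 ∧ p.2 ≠ 0) ∧ α * p.1 + β * p.2 ≠ 0))
      _ (Fintype.card F - 2), aux_c2 hα hβ]
    · rintro ⟨x, y⟩ hx
      simp at hx
      rw [aux_not _ {0, - (α * x + β * y) / γ}, Finset.card_pair]
      · symm; simp only [ne_eq, div_eq_zero_iff, neg_eq_zero]; tauto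
      · intro y; simp [hx, aux_lin hγ]
    · intro a b h; simp at h ⊢; tauto
  · rw [aux_prod (Finset.univ.filter
      (fun p : F × F => (p.1 ≠ 0 ∧ p.2 ≠ 0) ∧ α * p.1 + β * p.2 = 0))
      _ (Fintype.card F - 1), aux_c2z hα hβ]
    · rintro ⟨x, y⟩ hx
      simp at hx
      rw [← aux_c1]
      congr 1
      ext z; simp [hx, hγ]
    · intro a b h; simp at h ⊢; tauto

open Classical in
lemma aux_cp2 :
    (Finset.univ.filter (fun p : F × F => p.1 ≠ 0 ∧ p.2 ≠ 0)).card
      = (Fintype.card F - 1) * (Fintype.card F - 1) := by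
  rw [aux_prod (Finset.univ.filter (fun x : F => x ≠ 0)) _ (Fintype.card F - 1), aux_c1]
  · intro x hx
    simp at hx
    rw [← aux_c1]
    congr 1
    ext y; simp [hx]
  · intro a b h; simpa using h.1

open Classical in
lemma aux_c4 :
    (Finset.univ.filter (fun p : (F × F) × (F × F) => (p.1.1 ≠ 0 ∧ p.1.2 ≠ 0) ∧
        (p.2.1 ≠ 0 ∧ p.2.2 ≠ 0))).card
      = ((Fintype.card F - 1) * (Fintype.card F - 1)) *
        ((Fintype.card F - 1) * (Fintype.card F - 1)) := by
  rw [aux_prod (Finset.univ.filter (fun x : F × F => x.1 ≠ 0 ∧ x.2 ≠ 0)) _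
    ((Fintype.card F - 1) * (Fintype.card F - 1)), aux_cp2]
  · intro x hx
    simp at hx
    rw [← aux_cp2]
    congr 1
    ext y; simp [hx]
  · intro a b h; simpa using h.1

variable {m : ℕ}

/-- Affine functions. -/
abbrev AffW (F : Type) [Field F] (m : ℕ) : Type := ((Fin m → F) →ₗ[F] F) × F

instance : Finite (AffW F m) := Module.finite_of_finite F

def evW (x : Fin m → F) : AffW F m →+ F where
  toFun p := p.1 x + p.2
  map_zero' := by simp
  map_add' p r := by simp; ring

lemma aux_ext {k : ℕ} (v : Fin k → (Fin m → F)) (hv : LinearIndependent F (fun i => (v i, (1 : F))))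
    (t : Fin k → F) : ∃ p : AffW F m, ∀ i, evW (v i) p = t i := by
  obtain ⟨g, hg⟩ := LinearMap.exists_leftInverse_of_injective
    (Finsupp.linearCombination F (fun i => (v i, (1 : F)))) (LinearMap.ker_eq_bot.2 hv)
  let h : (Fin m → F) × F →ₗ[F] F := (Finsupp.linearCombination F t).comp g
  refine ⟨(h.comp (LinearMap.inl F _ _), h (0, 1)), fun i => ?_⟩
  have h1 : h (v i, 1) = t i := by
    have := congrArg (fun f => f (Finsupp.single i 1)) hg
    simp at this
    simp [h, this]
  rw [← h1]
  simp only [evW, AddMonoidHom.coe_mk, ZeroHom.coe_mk, LinearMap.comp_apply, LinearMap.inl_apply]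
  rw [← map_add]; simp

lemma aux_cardW : Nat.card (AffW F m) = Fintype.card F ^ (m + 1) := by
  rw [Module.natCard_eq_pow_finrank (K := F), Module.finrank_prod, Module.finrank_linearMap]
  simp

/-- number of affine functions nonvanishing at four points -/
noncomputable def NN (a b c d : Fin m → F) : ℕ :=
  {p : AffW F m | evW a p ≠ 0 ∧ evW b p ≠ 0 ∧ evW c p ≠ 0 ∧ evW d p ≠ 0}.ncard

lemma evW_comb2 {a b c : Fin m → F} {α β : F}
    (h : (c, (1 : F)) = α • (a, (1 : F)) + β • (b, (1 : F))) (p : AffW F m) :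
    evW c p = α * evW a p + β * evW b p := by
  simp only [Prod.smul_mk, Prod.mk_add_mk, Prod.mk.injEq, smul_eq_mul, mul_one] at h
  simp only [evW, AddMonoidHom.coe_mk, ZeroHom.coe_mk, h.1, map_add, map_smul, smul_eq_mul]
  linear_combination p.2 * h.2

lemma evW_comb3 {a b c d : Fin m → F} {α β γ : F}
    (h : (d, (1 : F)) = α • (a, (1 : F)) + β • (b, (1 : F)) + γ • (c, (1 : F))) (p : AffW F m) :
    evW d p = α * evW a p + β * evW b p + γ * evW c p := by
  simp only [Prod.smul_mk, Prod.mk_add_mk, Prod.mk.injEq, smul_eq_mul, mul_one] at h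
  simp only [evW, AddMonoidHom.coe_mk, ZeroHom.coe_mk, h.1, map_add, map_smul, smul_eq_mul]
  linear_combination p.2 * h.2

lemma aux_N2 {a b c d : Fin m → F} {α β α' β' : F}
    (hab : LinearIndependent F (fun i => (![a, b] i, (1 : F))))
    (hc : (c, (1 : F)) = α • (a, (1 : F)) + β • (b, (1 : F)))
    (hd : (d, (1 : F)) = α' • (a, (1 : F)) + β' • (b, (1 : F)))
    (hα : α ≠ 0) (hβ : β ≠ 0) (hα' : α' ≠ 0) (hβ' : β' ≠ 0) (hne : α * β' ≠ α' * β) :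
    NN a b c d * Fintype.card F ^ 2 =
      (Fintype.card F - 1) * (Fintype.card F - 3) * Fintype.card F ^ (m + 1) := by
  classical
  have := aux_count ((evW a).prod (evW b)) (by
    rintro ⟨x, y⟩
    obtain ⟨p, hp⟩ := aux_ext _ hab ![x, y]
    exact ⟨p, Prod.ext (hp 0) (hp 1)⟩) (fun p : F × F => (p.1 ≠ 0 ∧ p.2 ≠ 0) ∧
      α * p.1 + β * p.2 ≠ 0 ∧ α' * p.1 + β' * p.2 ≠ 0)
  rw [aux_c22 hα hβ hα' hβ' hne, aux_cardW, Fintype.card_prod] at this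
  rw [← this, pow_two]
  unfold NN
  congr 2
  ext p
  simp only [evW_comb2 hc, evW_comb2 hd, AddMonoidHom.prod_apply, Set.mem_ofPred_eq, and_assoc]

lemma aux_N3a {a b c d : Fin m → F} {α β : F}
    (habd : LinearIndependent F (fun i => (![a, b, d] i, (1 : F))))
    (hc : (c, (1 : F)) = α • (a, (1 : F)) + β • (b, (1 : F)))
    (hα : α ≠ 0) (hβ : β ≠ 0) :
    NN a b c d * Fintype.card F ^ 3 =
      (Fintype.card F - 1) * (Fintype.card F - 2) * (Fintype.card F - 1)
        * Fintype.card F ^ (m + 1) := by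
  classical
  have := aux_count (((evW a).prod (evW b)).prod (evW d)) (by
    rintro ⟨⟨x, y⟩, z⟩
    obtain ⟨p, hp⟩ := aux_ext _ habd ![x, y, z]
    exact ⟨p, Prod.ext (Prod.ext (hp 0) (hp 1)) (hp 2)⟩)
      (fun p : (F × F) × F => (p.1.1 ≠ 0 ∧ p.1.2 ≠ 0) ∧ p.2 ≠ 0 ∧
        α * p.1.1 + β * p.1.2 ≠ 0)
  rw [aux_c3a hα hβ, aux_cardW, Fintype.card_prod, Fintype.card_prod] at this
  rw [← this, pow_succ, pow_two]
  unfold NN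
  congr 2
  ext p
  simp only [evW_comb2 hc, AddMonoidHom.prod_apply, Set.mem_ofPred_eq]
  tauto

lemma aux_N3b {a b c d : Fin m → F} {α β γ : F}
    (habc : LinearIndependent F (fun i => (![a, b, c] i, (1 : F))))
    (hd : (d, (1 : F)) = α • (a, (1 : F)) + β • (b, (1 : F)) + γ • (c, (1 : F)))
    (hα : α ≠ 0) (hβ : β ≠ 0) (hγ : γ ≠ 0) :
    NN a b c d * Fintype.card F ^ 3 =
      ((Fintype.card F - 1) * (Fintype.card F - 2) * (Fintype.card F - 2)
        + (Fintype.card F - 1) * (Fintype.card F - 1)) * Fintype.card F ^ (m + 1) := by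
  classical
  have := aux_count (((evW a).prod (evW b)).prod (evW c)) (by
    rintro ⟨⟨x, y⟩, z⟩
    obtain ⟨p, hp⟩ := aux_ext _ habc ![x, y, z]
    exact ⟨p, Prod.ext (Prod.ext (hp 0) (hp 1)) (hp 2)⟩)
      (fun p : (F × F) × F => (p.1.1 ≠ 0 ∧ p.1.2 ≠ 0) ∧ p.2 ≠ 0 ∧
        α * p.1.1 + β * p.1.2 + γ * p.2 ≠ 0)
  rw [aux_c3b hα hβ hγ, aux_cardW, Fintype.card_prod, Fintype.card_prod] at this
  rw [← this, pow_succ, pow_two]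
  unfold NN
  congr 2
  ext p
  simp only [evW_comb3 hd, AddMonoidHom.prod_apply, Set.mem_ofPred_eq]
  tauto

lemma aux_N4 {a b c d : Fin m → F}
    (h : LinearIndependent F (fun i => (![a, b, c, d] i, (1 : F)))) :
    NN a b c d * Fintype.card F ^ 4 =
      ((Fintype.card F - 1) * (Fintype.card F - 1)) *
        ((Fintype.card F - 1) * (Fintype.card F - 1)) * Fintype.card F ^ (m + 1) := by
  classical
  have := aux_count (((evW a).prod (evW b)).prod ((evW c).prod (evW d))) (by
    rintro ⟨⟨x, y⟩, ⟨z, w⟩⟩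
    obtain ⟨p, hp⟩ := aux_ext _ h ![x, y, z, w]
    exact ⟨p, Prod.ext (Prod.ext (hp 0) (hp 1)) (Prod.ext (hp 2) (hp 3))⟩)
      (fun p : (F × F) × (F × F) => (p.1.1 ≠ 0 ∧ p.1.2 ≠ 0) ∧ (p.2.1 ≠ 0 ∧ p.2.2 ≠ 0))
  rw [aux_c4, aux_cardW, Fintype.card_prod, Fintype.card_prod] at this
  rw [← this, show Fintype.card F ^ 4 = Fintype.card F * Fintype.card F *
    (Fintype.card F * Fintype.card F) by ring]
  unfold NN
  congr 2
  ext p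
  simp only [AddMonoidHom.prod_apply, Set.mem_ofPred_eq]
  tauto

lemma NN_swap (a b c d : Fin m → F) : NN a b c d = NN a b d c := by
  unfold NN; congr 1; ext p; simp only [Set.mem_ofPred_eq]; tauto
lemma NN_swap2 (a b c d : Fin m → F) : NN a b c d = NN a c d b := by
  unfold NN; congr 1; ext p; simp only [Set.mem_ofPred_eq]; tauto
lemma NN_swap3 (a b c d : Fin m → F) : NN a b c d = NN b c d a := by
  unfold NN; congr 1; ext p; simp only [Set.mem_ofPred_eq]; tauto

lemma comb2_ne {a b c : Fin m → F} {α β : F} (hca : c ≠ a) (hcb : c ≠ b)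
    (h : (c, (1 : F)) = α • (a, (1 : F)) + β • (b, (1 : F))) :
    α ≠ 0 ∧ β ≠ 0 ∧ α + β = 1 := by
  simp only [Prod.smul_mk, Prod.mk_add_mk, Prod.mk.injEq, smul_eq_mul, mul_one] at h
  obtain ⟨h1, h2⟩ := h
  refine ⟨?_, ?_, h2.symm⟩
  · rintro rfl
    rw [zero_add] at h2
    subst h2
    apply hcb; simpa using h1
  · rintro rfl
    rw [add_zero] at h2
    subst h2
    apply hca; simpa using h1

lemma aux_indep_perm {k : ℕ} (v w : Fin k → (Fin m → F)) (σ : Fin k ≃ Fin k)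
    (h : LinearIndependent F (fun i => (v i, (1 : F)))) (hw : ∀ i, w i = v (σ i)) :
    LinearIndependent F (fun i => (w i, (1 : F))) := by
  have := h.comp σ σ.injective
  convert this using 2 with i
  simp [hw]

lemma aux_indep_sub {k n : ℕ} (v : Fin k → (Fin m → F)) (w : Fin n → (Fin m → F)) (σ : Fin n → Fin k)
    (hσ : Function.Injective σ)
    (h : LinearIndependent F (fun i => (v i, (1 : F)))) (hw : ∀ i, w i = v (σ i)) :
    LinearIndependent F (fun i => (w i, (1 : F))) := by
  have := h.comp σ hσ
  convert this using 2 with i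
  simp [hw]

lemma aux_snoc {k : ℕ} (v : Fin k → (Fin m → F)) (x : Fin m → F)
    (h : LinearIndependent F (fun i => (v i, (1 : F)))) :
    LinearIndependent F (fun i => ((Fin.snoc v x : Fin (k+1) → (Fin m → F)) i, (1 : F))) ∨
    ∃ α : Fin k → F, ∑ i, α i • (v i, (1 : F)) = (x, (1 : F)) := by
  by_cases hx : (x, (1 : F)) ∈ Submodule.span F (Set.range (fun i => (v i, (1 : F))))
  · right
    exact (Submodule.mem_span_range_iff_exists_fun F).1 hx
  · left
    have := linearIndependent_finSnoc.2 ⟨h, hx⟩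
    have e : (fun i => ((Fin.snoc v x : Fin (k+1) → (Fin m → F)) i, (1 : F)))
        = Fin.snoc (fun i => (v i, (1 : F))) (x, (1 : F)) := by
      ext i : 1
      refine Fin.lastCases ?_ (fun j => ?_) i <;> simp
    rw [e]; exact this

lemma aux_cases {a b c d : Fin m → F} (hab : a ≠ b) (hac : a ≠ c) (had : a ≠ d) (hbc : b ≠ c)
    (hbd : b ≠ d) (hcd : c ≠ d) :
    (3 ≤ m ∧ NN a b c d * Fintype.card F ^ 4 =
      ((Fintype.card F - 1) * (Fintype.card F - 1)) *
        ((Fintype.card F - 1) * (Fintype.card F - 1)) * Fintype.card F ^ (m + 1)) ∨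
    NN a b c d * Fintype.card F ^ 3 =
      (Fintype.card F - 1) * (Fintype.card F - 2) * (Fintype.card F - 1)
        * Fintype.card F ^ (m + 1) ∨
    NN a b c d * Fintype.card F ^ 3 =
      ((Fintype.card F - 1) * (Fintype.card F - 2) * (Fintype.card F - 2)
        + (Fintype.card F - 1) * (Fintype.card F - 1)) * Fintype.card F ^ (m + 1) ∨
    NN a b c d * Fintype.card F ^ 2 =
      (Fintype.card F - 1) * (Fintype.card F - 3) * Fintype.card F ^ (m + 1) := by
  have h2 : LinearIndependent F (fun i => (![a, b] i, (1 : F))) := by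
    have : (fun i => (![a, b] i, (1 : F))) = ![(a, (1 : F)), (b, (1 : F))] := by
      ext i : 1; fin_cases i <;> rfl
    rw [this, LinearIndependent.pair_iff]
    intro s t hst
    simp only [Prod.smul_mk, Prod.mk_add_mk, smul_eq_mul, mul_one, Prod.mk_eq_zero] at hst
    obtain ⟨h1, h2⟩ := hst
    have ht : t = -s := by linear_combination h2
    subst ht
    have : s • (a - b) = 0 := by rw [← h1]; module
    rcases smul_eq_zero.1 this with h | h
    · simp [h]
    · exact absurd (sub_eq_zero.1 h) hab
  rcases aux_snoc _ c h2 with h3 | ⟨α, hc⟩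
  · have h3 : LinearIndependent F (fun i => (![a, b, c] i, (1 : F))) := by
      convert h3 using 3 with i; fin_cases i <;> rfl
    rcases aux_snoc _ d h3 with h4 | ⟨α, hd⟩
    · have h4 : LinearIndependent F (fun i => (![a, b, c, d] i, (1 : F))) := by
        convert h4 using 3 with i; fin_cases i <;> rfl
      left
      refine ⟨?_, aux_N4 h4⟩
      have := h4.fintype_card_le_finrank
      simp at this
      omega
    · right
      simp only [Fin.sum_univ_three, Matrix.cons_val_zero, Matrix.cons_val_one,
        Matrix.cons_val] at hd
      by_cases e0 : α 0 = 0
      · rw [e0, zero_smul, zero_add] at hd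
        obtain ⟨ha, hb, -⟩ := comb2_ne hbd.symm hcd.symm hd.symm
        left
        rw [NN_swap3]
        exact aux_N3a (aux_indep_sub _ _ ![1, 2, 0] (by decide) h3
          (by intro i; fin_cases i <;> rfl)) hd.symm ha hb
      by_cases e1 : α 1 = 0
      · rw [e1, zero_smul, add_zero] at hd
        obtain ⟨ha, hb, -⟩ := comb2_ne had.symm hcd.symm hd.symm
        left
        rw [NN_swap2]
        exact aux_N3a (aux_indep_sub _ _ ![0, 2, 1] (by decide) h3
          (by intro i; fin_cases i <;> rfl)) hd.symm ha hb
      by_cases e2 : α 2 = 0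
      · rw [e2, zero_smul, add_zero] at hd
        obtain ⟨ha, hb, -⟩ := comb2_ne had.symm hbd.symm hd.symm
        left
        rw [NN_swap]
        exact aux_N3a h3 hd.symm ha hb
      right; left
      exact aux_N3b h3 hd.symm e0 e1 e2
  · right
    simp only [Fin.sum_univ_two, Matrix.cons_val_zero, Matrix.cons_val_one] at hc
    obtain ⟨ha, hb, h1⟩ := comb2_ne hac.symm hbc.symm hc.symm
    rcases aux_snoc _ d h2 with h3 | ⟨β, hd⟩
    · have h3 : LinearIndependent F (fun i => (![a, b, d] i, (1 : F))) := by
        convert h3 using 3 with i; fin_cases i <;> rfl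
      left
      exact aux_N3a h3 hc.symm ha hb
    · simp only [Fin.sum_univ_two, Matrix.cons_val_zero, Matrix.cons_val_one] at hd
      obtain ⟨ha', hb', h1'⟩ := comb2_ne had.symm hbd.symm hd.symm
      right; right
      refine aux_N2 h2 hc.symm hd.symm ha hb ha' hb' ?_
      intro h
      have e0 : α 0 = β 0 := by linear_combination h - α 0 * h1' + β 0 * h1
      have e1 : α 1 = β 1 := by linear_combination h1 - h1' - e0
      rw [e0, e1, hd] at hc
      simp at hc
      exact hcd hc.symm

lemma aux_wt (l : (Fin m → F) →ₗ[F] F) (b : F) (hl : l ≠ 0) :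
    {x | l x + b ≠ 0}.ncard * Fintype.card F = (Fintype.card F - 1) * Fintype.card F ^ m := by
  classical
  have := aux_count l.toAddMonoidHom (LinearMap.surjective hl) (fun y => y + b ≠ 0)
  rw [aux_not _ {-b} (by simp [add_eq_zero_iff_eq_neg])] at this
  simpa using this

end

lemma aux_four {A : Type*} [DecidableEq A] (T : Finset A) (hT : T.card = 4) :
    ∃ a b c d, a ≠ b ∧ a ≠ c ∧ a ≠ d ∧ b ≠ c ∧ b ≠ d ∧ c ≠ d ∧
      ∀ x, x ∈ T ↔ x = a ∨ x = b ∨ x = c ∨ x = d := by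
  obtain ⟨a, S, ha, rfl, hS⟩ := Finset.card_eq_succ.1 hT
  obtain ⟨b, c, d, hbc, hbd, hcd, rfl⟩ := Finset.card_eq_three.1 hS
  simp at ha
  exact ⟨a, b, c, d, ha.1, ha.2.1, ha.2.2, hbc, hbd, hcd, by simp⟩

lemma aux_split {F : Type} [Field F] [Fintype F] {m : ℕ} (a b c d : Fin m → F) :
    {p : AffW F m | p.1 ≠ 0 ∧ evW a p ≠ 0 ∧ evW b p ≠ 0 ∧ evW c p ≠ 0 ∧ evW d p ≠ 0}.ncard
      + (Fintype.card F - 1) = NN a b c d := by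
  classical
  have h0 : {p : AffW F m | p.1 = 0 ∧ evW a p ≠ 0 ∧ evW b p ≠ 0 ∧ evW c p ≠ 0 ∧
      evW d p ≠ 0}.ncard = Fintype.card F - 1 := by
    rw [← aux_c1, ← Set.ncard_coe_finset]
    symm
    apply Set.ncard_congr (fun b _ => ((0 : (Fin m → F) →ₗ[F] F), b))
    · intro y hy
      simp at hy
      simp [evW, hy]
    · intro y z _ _ h
      simpa using h
    · rintro ⟨l, y⟩ ⟨h1, h2, -⟩
      simp at h1
      subst h1
      simp [evW] at h2
      exact ⟨y, by simpa using h2, rfl⟩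
  rw [← h0, NN, ← Set.ncard_union_eq]
  · congr 1
    ext p
    simp only [Set.mem_union, Set.mem_ofPred_eq]
    tauto
  · rw [Set.disjoint_left]
    intro p hp hp'
    exact hp.1 hp'.1

/-- The shell of weight `(q-1)q^(m-1)` of `RM_q(1,m)` is a
`4-(q^m, ℓ, (λ₁, λ₂, λ₃, λ₄))`-design: every 4-subset of `V` is contained in the
support of exactly `λ₁`, `λ₂`, `λ₃` or `λ₄` weight-`ℓ` codewords (the value `λ₁`
occurring only when `m ≥ 3`). -/
theorem stmt_17 (F : Type) [Field F] [Fintype F] (q m : ℕ) (hq : q = Fintype.card F)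
    (hq3 : 3 ≤ q) (hm : 2 ≤ m)
    (C : Set ((Fin m → F) → F))
    (hC : C = {c | ∃ (l : (Fin m → F) →ₗ[F] F) (b : F), c = fun x => l x + b})
    (wt : ((Fin m → F) → F) → ℕ)
    (hwt : ∀ c, wt c = {x | c x ≠ 0}.ncard)
    (ℓ : ℕ) (hℓ : ℓ = (q - 1) * q ^ (m - 1))
    (T : Finset (Fin m → F)) (hT : T.card = 4) :
    (3 ≤ m ∧ {c ∈ C | wt c = ℓ ∧ ∀ x ∈ T, c x ≠ 0}.ncard
        = (q - 1) * (q ^ m - 3 * q ^ (m - 1) + 3 * q ^ (m - 2) - q ^ (m - 3) - 1)) ∨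
    {c ∈ C | wt c = ℓ ∧ ∀ x ∈ T, c x ≠ 0}.ncard
        = (q - 1) * (q ^ m - 3 * q ^ (m - 1) + 2 * q ^ (m - 2) - 1) ∨
    {c ∈ C | wt c = ℓ ∧ ∀ x ∈ T, c x ≠ 0}.ncard
        = (q - 1) * (q ^ m - 3 * q ^ (m - 1) + 3 * q ^ (m - 2) - 1) ∨
    {c ∈ C | wt c = ℓ ∧ ∀ x ∈ T, c x ≠ 0}.ncard
        = (q - 1) * (q ^ m - 3 * q ^ (m - 1) - 1) := by
  classical
  obtain ⟨a, b, c, d, hab, hac, had, hbc, hbd, hcd, hTm⟩ := aux_four T hT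
  have hS : {c ∈ C | wt c = ℓ ∧ ∀ x ∈ T, c x ≠ 0}.ncard + (q - 1) = NN a b c d := by
    rw [← aux_split, hq]
    congr 1
    symm
    apply Set.ncard_congr (fun p _ => fun x => p.1 x + p.2)
    · rintro ⟨l, y⟩ ⟨hl, h1, h2, h3, h4⟩
      refine ⟨by rw [hC]; exact ⟨l, y, rfl⟩, ?_, ?_⟩
      · rw [hwt, hℓ]
        have := aux_wt l y hl
        rw [← hq] at this
        obtain ⟨j, rfl⟩ : ∃ j, m = j + 1 := ⟨m - 1, by omega⟩
        rw [pow_succ, ← mul_assoc] at this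
        exact Nat.eq_of_mul_eq_mul_right (by omega) this
      · intro x hx
        rcases (hTm x).1 hx with rfl | rfl | rfl | rfl
        · exact h1
        · exact h2
        · exact h3
        · exact h4
    · rintro ⟨l, y⟩ ⟨l', y'⟩ _ _ h
      have hy : y = y' := by simpa using congrFun h 0
      subst hy
      refine Prod.ext ?_ rfl
      apply LinearMap.ext
      intro x
      simpa using congrFun h x
    · rintro f ⟨hf, hw, hx⟩
      rw [hC] at hf
      obtain ⟨l, y, rfl⟩ := hf
      refine ⟨(l, y), ⟨?_, hx a ((hTm a).2 (by simp)), hx b ((hTm b).2 (by simp)),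
        hx c ((hTm c).2 (by simp)), hx d ((hTm d).2 (by simp))⟩, rfl⟩
      intro hl
      simp only at hl
      subst hl
      have hy : y ≠ 0 := by simpa using hx a ((hTm a).2 (by simp))
      rw [hwt, hℓ] at hw
      have hu : {x : Fin m → F | (0 : (Fin m → F) →ₗ[F] F) x + y ≠ 0} = Set.univ := by
        ext x; simp [hy]
      rw [hu, Set.ncard_univ, Nat.card_eq_fintype_card, Fintype.card_fun, Fintype.card_fin,
        ← hq] at hw
      obtain ⟨j, rfl⟩ : ∃ j, m = j + 1 := ⟨m - 1, by omega⟩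
      rw [Nat.add_sub_cancel, pow_succ, mul_comm] at hw
      have := Nat.eq_of_mul_eq_mul_right (by positivity) hw
      omega
  have key := aux_cases hab hac had hbc hbd hcd
  rw [← hS, ← hq] at key
  generalize {c ∈ C | wt c = ℓ ∧ ∀ x ∈ T, c x ≠ 0}.ncard = S at key
  clear hS hwt hC hℓ hq
  obtain ⟨r, rfl⟩ : ∃ r, q = r + 3 := ⟨q - 3, by omega⟩
  obtain ⟨j, rfl⟩ : ∃ j, m = j + 2 := ⟨m - 2, by omega⟩
  have e1 : r + 3 - 1 = r + 2 := rfl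
  have e2 : r + 3 - 2 = r + 1 := rfl
  have e3 : r + 3 - 3 = r := rfl
  have e4 : j + 2 - 1 = j + 1 := rfl
  have e5 : j + 2 - 2 = j := rfl
  simp only [e1, e2, e3, e4, e5] at key ⊢
  have f1 : (r + 3) ^ (j + 2) - 3 * (r + 3) ^ (j + 1) = r * (r + 3) ^ (j + 1) := by
    rw [pow_succ (r + 3) (j + 1), mul_comm, ← Nat.sub_mul]; rfl
  rw [f1]
  rcases key with ⟨h3, h⟩ | h | h | h
  · left
    refine ⟨h3, ?_⟩
    obtain ⟨i, rfl⟩ : ∃ i, j = i + 1 := ⟨j - 1, by omega⟩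
    have e6 : i + 1 + 2 - 3 = i := rfl
    rw [e6]
    have h : S + (r + 2) = (r + 2) * ((r + 2) ^ 3 * (r + 3) ^ i) :=
      Nat.eq_of_mul_eq_mul_right (show 0 < (r + 3) ^ 4 by positivity) (by rw [h]; ring)
    have f2 : r * (r + 3) ^ (i + 1 + 1) + 3 * (r + 3) ^ (i + 1) - (r + 3) ^ i
        = (r + 2) ^ 3 * (r + 3) ^ i := by
      apply Nat.sub_eq_of_eq_add; ring
    rw [f2, Nat.mul_sub, ← h]; omega
  · right; left
    have h : S + (r + 2) = (r + 2) * (r * (r + 3) ^ (j + 1) + 2 * (r + 3) ^ j) :=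
      Nat.eq_of_mul_eq_mul_right (show 0 < (r + 3) ^ 3 by positivity) (by rw [h]; ring)
    rw [Nat.mul_sub, ← h]; omega
  · right; right; left
    have h : S + (r + 2) = (r + 2) * (r * (r + 3) ^ (j + 1) + 3 * (r + 3) ^ j) :=
      Nat.eq_of_mul_eq_mul_right (show 0 < (r + 3) ^ 3 by positivity) (by rw [h]; ring)
    rw [Nat.mul_sub, ← h]; omega
  · right; right; right
    have h : S + (r + 2) = (r + 2) * (r * (r + 3) ^ (j + 1)) :=
      Nat.eq_of_mul_eq_mul_right (show 0 < (r + 3) ^ 2 by positivity) (by rw [h]; ring)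
    rw [Nat.mul_sub, ← h]; omega
end
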